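/- With the setup of the map T ↦ c(T) defined by c_i(T) = λ_i(T) + μ_i(T) + ν_i(T) on spanning trees of a permutation graph G_π with sink s, this map is a bijection from the set of spanning trees of G_π to the set of recurrent configurations Rec_s(G_π). -/

import Mathlib

open Finset
open scoped Classical

def permGraph {n : ℕ} (π : Equiv.Perm (Fin n)) : SimpleGraph (Fin n) :=
  SimpleGraph.fromRel (fun i j => i < j ∧ π.symm j < π.symm i)

def IsIndecomposable {n : ℕ} (π : Equiv.Perm (Fin n)) : Prop :=
  ∀ k : ℕ, 0 < k → k < n → ¬ (∀ i : Fin n, (i : ℕ) < k → ((π i : ℕ) < k))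

noncomputable def topple {n : ℕ} (G : SimpleGraph (Fin n)) (c : Fin n → ℕ) (i : Fin n) :
    Fin n → ℕ :=
  fun j => if j = i then c j - G.degree i else c j + (if G.Adj i j then 1 else 0)

noncomputable def toppleList {n : ℕ} (G : SimpleGraph (Fin n)) (c : Fin n → ℕ) :
    List (Fin n) → (Fin n → ℕ)
  | [] => c
  | i :: l => toppleList G (topple G c i) l

def ValidTopplings {n : ℕ} (G : SimpleGraph (Fin n)) (c : Fin n → ℕ) :
    List (Fin n) → Prop
  | [] => True
  | i :: l => G.degree i ≤ c i ∧ ValidTopplings G (topple G c i) l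

def IsRecurrent {n : ℕ} (G : SimpleGraph (Fin n)) (s : Fin n) (c : Fin n → ℕ) : Prop :=
  c s = G.degree s ∧ (∀ i, i ≠ s → c i < G.degree i) ∧
    ∃ l : List (Fin n), l.head? = some s ∧ l.Nodup ∧ (∀ v, v ∈ l) ∧
      ValidTopplings G c l ∧ toppleList G c l = c

/-- `λ i`: number of neighbors of `i` in `G` whose height in `T` (distance to the
root `s`) is strictly greater than that of `i`. -/
noncomputable def lamStat {n : ℕ} (G T : SimpleGraph (Fin n)) (s i : Fin n) : ℕ :=
  (Finset.univ.filter fun j => G.Adj i j ∧ T.dist s i < T.dist s j).card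

/-- `μ i`: number of neighbors of `i` in `G` at the same height in `T` as `i`. -/
noncomputable def muStat {n : ℕ} (G T : SimpleGraph (Fin n)) (s i : Fin n) : ℕ :=
  (Finset.univ.filter fun j => G.Adj i j ∧ T.dist s j = T.dist s i).card

/-- `ν i`: number of neighbors `j` of `i` in `G` at height `h(i) - 1` in `T` with
`j < p(i)`, where `p(i)` is the parent of `i` in `T` rooted at `s` (characterized as
the unique `T`-neighbor `q` of `i` at height `h(i) - 1`). -/
noncomputable def nuStat {n : ℕ} (G T : SimpleGraph (Fin n)) (s i : Fin n) : ℕ :=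
  (Finset.univ.filter fun j => G.Adj i j ∧ T.dist s j + 1 = T.dist s i ∧
    ∃ q : Fin n, T.Adj i q ∧ T.dist s q + 1 = T.dist s i ∧ j < q).card

/-- The configuration associated with a spanning tree `T` of `G` rooted at `s`. -/
noncomputable def treeConfig {n : ℕ} (G T : SimpleGraph (Fin n)) (s : Fin n) :
    Fin n → ℕ :=
  fun i => lamStat G T s i + muStat G T s i + nuStat G T s i

/-- `p` and `h` are the parent map and the height function of the graph `T` rooted at `s`. -/
structure IsRootedBy {V : Type*} (T : SimpleGraph V) (s : V) (p : V → V) (h : V → ℕ) :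
    Prop where
  adj_iff : ∀ i j, T.Adj i j ↔ (i ≠ s ∧ p i = j) ∨ (j ≠ s ∧ p j = i)
  height_parent : ∀ i, i ≠ s → h (p i) + 1 = h i
  height_root : h s = 0

/-- A vertex other than the root has a neighbor that is closer to the root. -/
lemma exists_adj_dist_add_one {V : Type*} {T : SimpleGraph V} (hT : T.Connected) {s i : V}
    (hi : i ≠ s) : ∃ q, T.Adj i q ∧ T.dist s q + 1 = T.dist s i := by
  obtain ⟨w, hw⟩ := hT.exists_walk_length_eq_dist i s
  cases w with
  | nil => exact absurd rfl hi
  | @cons _ q _ hadj w =>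
    refine ⟨q, hadj, ?_⟩
    have h1 := SimpleGraph.dist_le w
    have h2 := hT.dist_triangle (u := i) (v := q) (w := s)
    have h3 : T.dist i q = 1 := SimpleGraph.dist_eq_one_iff_adj.2 hadj
    rw [SimpleGraph.Walk.length_cons] at hw
    rw [T.dist_comm (u := s) (v := q), T.dist_comm (u := s) (v := i)]
    omega

lemma injOn_sym2_parent {V : Type*} {s : V} {p : V → V} {h : V → ℕ}
    (hp : ∀ i, i ≠ s → h (p i) + 1 = h i) :
    Set.InjOn (fun i => s(i, p i)) {i | i ≠ s} := by
  intro i hi j hj hij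
  have h1 := hp i hi
  have h2 := hp j hj
  rcases Sym2.eq_iff.1 hij with ⟨h3, -⟩ | ⟨h3, h4⟩
  · exact h3
  · rw [h4] at h1
    rw [← h3] at h2
    omega

lemma SimpleGraph.IsTree.exists_isRootedBy {V : Type*} [Fintype V] {T : SimpleGraph V}
    (hT : T.IsTree) (s : V) : ∃ p, IsRootedBy T s p (T.dist s) := by
  have hex : ∀ i, ∃ q, i ≠ s → T.Adj i q ∧ T.dist s q + 1 = T.dist s i := fun i => by
    by_cases hi : i = s
    · exact ⟨i, fun h => absurd hi h⟩
    · obtain ⟨q, hq⟩ := exists_adj_dist_add_one hT.connected hi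
      exact ⟨q, fun _ => hq⟩
  choose p hp using hex
  refine ⟨p, fun i j => ⟨fun hij => ?_, ?_⟩, fun i hi => (hp i hi).2, SimpleGraph.dist_self⟩
  · have hsub : (univ.filter (· ≠ s)).image (fun i => s(i, p i)) ⊆ T.edgeFinset := by
      intro e he
      obtain ⟨k, hk, rfl⟩ := mem_image.1 he
      simpa using (hp k (mem_filter.1 hk).2).1
    have hcard : ((univ.filter (· ≠ s)).image (fun i => s(i, p i))).card + 1
        = Fintype.card V := by
      rw [card_image_of_injOn, filter_ne', card_erase_add_one (mem_univ s), card_univ]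
      simpa using injOn_sym2_parent (s := s) (fun i hi => (hp i hi).2)
    have heq := eq_of_subset_of_card_le hsub (by have := hT.card_edgeFinset; omega)
    have hmem : s(i, j) ∈ T.edgeFinset := by simpa using hij
    rw [← heq, mem_image] at hmem
    obtain ⟨k, hk, hke⟩ := hmem
    have hks : k ≠ s := (mem_filter.1 hk).2
    rcases Sym2.eq_iff.1 hke with ⟨rfl, h⟩ | ⟨rfl, h⟩
    · exact Or.inl ⟨hks, h⟩
    · exact Or.inr ⟨hks, h⟩
  · rintro (⟨hi, rfl⟩ | ⟨hj, rfl⟩)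
    · exact (hp i hi).1
    · exact (hp j hj).1.symm

namespace IsRootedBy

variable {V : Type*} {T : SimpleGraph V} {s : V} {p : V → V} {h : V → ℕ}

lemma height_eq_zero_iff (hr : IsRootedBy T s p h) {i : V} : h i = 0 ↔ i = s := by
  refine ⟨fun hi => ?_, fun hi => hi ▸ hr.height_root⟩
  by_contra hne
  have := hr.height_parent i hne
  omega

lemma adj_parent (hr : IsRootedBy T s p h) {i : V} (hi : i ≠ s) : T.Adj i (p i) :=
  (hr.adj_iff _ _).2 (Or.inl ⟨hi, rfl⟩)

lemma exists_walk_length_eq (hr : IsRootedBy T s p h) (i : V) :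
    ∃ w : T.Walk i s, w.length = h i := by
  induction hk : h i generalizing i with
  | zero =>
    obtain rfl := hr.height_eq_zero_iff.1 hk
    exact ⟨.nil, rfl⟩
  | succ k ih =>
    have hi : i ≠ s := fun hi => by rw [hr.height_eq_zero_iff.2 hi] at hk; omega
    have hpi := hr.height_parent i hi
    obtain ⟨w, hw⟩ := ih (p i) (by omega)
    exact ⟨.cons (hr.adj_parent hi) w, by simp [hw]⟩

lemma height_le_length_add (hr : IsRootedBy T s p h) {i j : V} (w : T.Walk i j) :
    h i ≤ w.length + h j := by
  induction w with
  | nil => simp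
  | @cons a b _ hab w ih =>
    rw [SimpleGraph.Walk.length_cons]
    rcases (hr.adj_iff _ _).1 hab with ⟨ha, rfl⟩ | ⟨hb, rfl⟩
    · have := hr.height_parent _ ha
      omega
    · have := hr.height_parent _ hb
      omega

lemma connected (hr : IsRootedBy T s p h) : T.Connected := by
  have : Nonempty V := ⟨s⟩
  refine ⟨fun i j => ?_⟩
  obtain ⟨w, -⟩ := hr.exists_walk_length_eq i
  obtain ⟨w', -⟩ := hr.exists_walk_length_eq j
  exact ⟨w.append w'.reverse⟩

lemma dist_eq (hr : IsRootedBy T s p h) (i : V) : T.dist s i = h i := by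
  rw [SimpleGraph.dist_comm]
  obtain ⟨w, hw⟩ := hr.exists_walk_length_eq i
  obtain ⟨w', hw'⟩ := hr.connected.exists_walk_length_eq_dist i s
  have h1 := hr.height_le_length_add w'
  have h2 := SimpleGraph.dist_le w
  rw [hr.height_root] at h1
  omega

lemma isTree [Fintype V] (hr : IsRootedBy T s p h) : T.IsTree := by
  refine SimpleGraph.isTree_iff_connected_and_card.2 ⟨hr.connected, ?_⟩
  refine le_antisymm ?_ hr.connected.card_vert_le_card_edgeSet_add_one
  have hsub : T.edgeFinset ⊆ (univ.filter (· ≠ s)).image (fun i => s(i, p i)) := by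
    intro e he
    induction e with
    | _ i j =>
      simp only [SimpleGraph.mem_edgeFinset, SimpleGraph.mem_edgeSet] at he
      rw [mem_image]
      rcases (hr.adj_iff _ _).1 he with ⟨hi, rfl⟩ | ⟨hj, rfl⟩
      · exact ⟨i, by simpa using hi, rfl⟩
      · exact ⟨j, by simpa using hj, Sym2.eq_swap⟩
  have h1 := (card_le_card hsub).trans card_image_le
  rw [filter_ne', card_erase_of_mem (mem_univ s), card_univ] at h1
  have h2 : 0 < Fintype.card V := Fintype.card_pos_iff.2 ⟨s⟩
  rw [Nat.card_eq_fintype_card, Nat.card_eq_fintype_card, ← SimpleGraph.edgeFinset_card]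
  omega

lemma eq_parent (hr : IsRootedBy T s p h) {i q : V} (hq : T.Adj i q) (hh : h q + 1 = h i) :
    i ≠ s ∧ q = p i := by
  rcases (hr.adj_iff _ _).1 hq with ⟨hi, rfl⟩ | ⟨hj, rfl⟩
  · exact ⟨hi, rfl⟩
  · have := hr.height_parent _ hj
    omega

end IsRootedBy

lemma degree_eq_card_filter {n : ℕ} (G : SimpleGraph (Fin n)) (i : Fin n) :
    G.degree i = (univ.filter fun j => G.Adj i j).card := by
  rw [← SimpleGraph.card_neighborFinset_eq_degree, SimpleGraph.neighborFinset_eq_filter]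

section TreeConfig

variable {n : ℕ} {G T : SimpleGraph (Fin n)} {s : Fin n} {p : Fin n → Fin n} {h : Fin n → ℕ}

lemma treeConfig_root (hT : T.Connected) : treeConfig G T s s = G.degree s := by
  rw [degree_eq_card_filter]
  simp only [treeConfig, lamStat, muStat, nuStat, card_filter, ← sum_add_distrib]
  refine sum_congr rfl fun j _ => ?_
  by_cases hj : G.Adj s j
  · have : 0 < T.dist s j := hT.pos_dist_of_ne hj.ne
    simp [hj, this, this.ne']
  · simp [hj]

lemma treeConfig_add (hr : IsRootedBy T s p (T.dist s)) {i : Fin n} (hi : i ≠ s) :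
    treeConfig G T s i + (univ.filter fun j => G.Adj i j ∧ T.dist s j + 1 < T.dist s i).card
      + (univ.filter fun j => (G.Adj i j ∧ T.dist s j + 1 = T.dist s i) ∧ p i ≤ j).card
      = G.degree i := by
  have hnu : ∀ j, (∃ q : Fin n, T.Adj i q ∧ T.dist s q + 1 = T.dist s i ∧ j < q) ↔ j < p i := by
    refine fun j => ⟨?_, fun hj => ⟨p i, hr.adj_parent hi, hr.height_parent i hi, hj⟩⟩
    rintro ⟨q, hq, hh, hj⟩
    rwa [← (hr.eq_parent hq hh).2]
  rw [degree_eq_card_filter]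
  simp only [treeConfig, lamStat, muStat, nuStat, hnu, card_filter, ← sum_add_distrib]
  refine sum_congr rfl fun j _ => ?_
  by_cases hj : G.Adj i j
  · simp only [hj, true_and, if_true]
    rcases lt_or_ge j (p i) with hlt | hge
    · simp only [hlt, not_le.2 hlt, and_true, and_false, if_false]
      split_ifs <;> omega
    · simp only [hge, not_lt.2 hge, and_true, and_false, if_false]
      split_ifs <;> omega
  · simp [hj]

end TreeConfig

/-- `h i` is the step at which `i` becomes unstable when, starting from `c` with `s` toppled at
step `0`, all unstable vertices are toppled simultaneously. -/
structure IsCanonicalHeight {n : ℕ} (G : SimpleGraph (Fin n)) (s : Fin n) (c h : Fin n → ℕ) :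
    Prop where
  eq_zero_iff : ∀ i, h i = 0 ↔ i = s
  add_lt_degree : ∀ i, i ≠ s →
    c i + (univ.filter fun j => G.Adj i j ∧ h j + 1 < h i).card < G.degree i
  degree_le_add : ∀ i, i ≠ s →
    G.degree i ≤ c i + (univ.filter fun j => G.Adj i j ∧ h j < h i).card

section CanonicalHeight

variable {n : ℕ} {G T : SimpleGraph (Fin n)} {s : Fin n} {p : Fin n → Fin n} {c h h' : Fin n → ℕ}

lemma card_filter_lt_eq (i : Fin n) :
    (univ.filter fun j => G.Adj i j ∧ h j < h i).card
      = (univ.filter fun j => G.Adj i j ∧ h j + 1 < h i).card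
        + (univ.filter fun j => G.Adj i j ∧ h j + 1 = h i).card := by
  simp only [card_filter, ← sum_add_distrib]
  refine sum_congr rfl fun j _ => ?_
  by_cases hj : G.Adj i j
  · simp only [hj, true_and]
    split_ifs <;> omega
  · simp [hj]

lemma isCanonicalHeight_dist (hTG : T ≤ G) (hr : IsRootedBy T s p (T.dist s)) :
    IsCanonicalHeight G s (treeConfig G T s) (T.dist s) := by
  refine ⟨fun i => hr.height_eq_zero_iff, fun i hi => ?_, fun i hi => ?_⟩
  · have h1 := treeConfig_add (G := G) hr hi
    have h2 : 0 < (univ.filter fun j =>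
        (G.Adj i j ∧ T.dist s j + 1 = T.dist s i) ∧ p i ≤ j).card :=
      card_pos.2 ⟨p i, by simp [hTG (hr.adj_parent hi), hr.height_parent i hi]⟩
    omega
  · have h1 := treeConfig_add (G := G) hr hi
    have h2 : (univ.filter fun j =>
        (G.Adj i j ∧ T.dist s j + 1 = T.dist s i) ∧ p i ≤ j).card ≤
        (univ.filter fun j => G.Adj i j ∧ T.dist s j + 1 = T.dist s i).card :=
      card_le_card fun j hj => by
        simp only [mem_filter] at hj ⊢
        exact ⟨hj.1, hj.2.1⟩
    have h3 := card_filter_lt_eq (G := G) (h := T.dist s) i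
    omega

lemma IsCanonicalHeight.le (hh : IsCanonicalHeight G s c h) (hh' : IsCanonicalHeight G s c h')
    (i : Fin n) : h' i ≤ h i := by
  suffices H : ∀ k i, h i ≤ k → h' i ≤ k from H _ i le_rfl
  intro k
  induction k with
  | zero =>
    intro i hi
    exact ((hh'.eq_zero_iff i).2 ((hh.eq_zero_iff i).1 (by omega))).le
  | succ k ih =>
    intro i hi
    by_contra hcon
    have his : i ≠ s := fun his => by
      have := (hh'.eq_zero_iff i).2 his
      omega
    have h1 := hh'.add_lt_degree i his
    have h2 := hh.degree_le_add i his
    have h3 : (univ.filter fun j => G.Adj i j ∧ h j < h i).card ≤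
        (univ.filter fun j => G.Adj i j ∧ h' j + 1 < h' i).card :=
      card_le_card fun j hj => by
        simp only [mem_filter] at hj ⊢
        have := ih j (by omega)
        exact ⟨hj.1, hj.2.1, by omega⟩
    omega

lemma IsCanonicalHeight.unique (hh : IsCanonicalHeight G s c h)
    (hh' : IsCanonicalHeight G s c h') : h = h' :=
  funext fun i => le_antisymm (hh'.le hh i) (hh.le hh' i)

end CanonicalHeight

section Topplings

variable {n : ℕ} {G : SimpleGraph (Fin n)}

lemma toppleList_add_count {c : Fin n → ℕ} {l : List (Fin n)} (hl : ValidTopplings G c l)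
    (j : Fin n) :
    toppleList G c l j + l.count j * G.degree j = c j + l.countP (fun k => G.Adj j k) := by
  induction l generalizing c with
  | nil => simp [toppleList]
  | cons i l ih =>
    have h1 := ih hl.2
    have h2 := hl.1
    simp only [toppleList, List.count_cons, List.countP_cons]
    by_cases hji : j = i
    · subst hji
      simp only [topple, if_true] at h1
      simp only [beq_self_eq_true, if_true, SimpleGraph.irrefl, decide_false, add_mul, one_mul]
      simp only [Bool.false_eq_true, if_false]
      omega
    · simp only [topple, hji, if_false] at h1
      have h3 : (i == j) = false := by simpa using Ne.symm hji
      simp only [h3, Bool.false_eq_true, if_false, add_zero, decide_eq_true_eq, G.adj_comm j i]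
      omega

lemma validTopplings_iff {c : Fin n → ℕ} {l : List (Fin n)} (hl : l.Nodup) :
    ValidTopplings G c l ↔ ∀ l₁ j l₂, l = l₁ ++ j :: l₂ →
      G.degree j ≤ c j + l₁.countP (fun k => G.Adj j k) := by
  induction l generalizing c with
  | nil => simp [ValidTopplings]
  | cons i l ih =>
    rw [List.nodup_cons] at hl
    have key : ∀ l₁ j l₂, l = l₁ ++ j :: l₂ →
        topple G c i j + l₁.countP (fun k => G.Adj j k)
          = c j + (i :: l₁).countP (fun k => G.Adj j k) := by
      rintro l₁ j l₂ rfl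
      have hji : j ≠ i := fun hji => hl.1 (by simp [hji])
      simp only [topple, hji, if_false, List.countP_cons, decide_eq_true_eq, G.adj_comm j i]
      omega
    rw [ValidTopplings, ih hl.2]
    constructor
    · rintro ⟨h1, h2⟩ l₁ j l₂ hsplit
      cases l₁ with
      | nil =>
        obtain ⟨rfl, -⟩ := List.cons.inj hsplit
        simpa using h1
      | cons a l₁ =>
        obtain ⟨rfl, htail⟩ := List.cons.inj hsplit
        rw [← key l₁ j l₂ htail]
        exact h2 l₁ j l₂ htail
    · intro H
      refine ⟨by simpa using H [] i l rfl, fun l₁ j l₂ hsplit => ?_⟩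
      rw [key l₁ j l₂ hsplit]
      exact H (i :: l₁) j l₂ (by rw [hsplit]; rfl)

lemma countP_eq_card_filter {l : List (Fin n)} (hl : l.Nodup) (i : Fin n) :
    l.countP (fun k => G.Adj i k) = (univ.filter fun k => G.Adj i k ∧ k ∈ l).card := by
  rw [List.countP_eq_length_filter, ← List.toFinset_card_of_nodup (hl.filter _)]
  congr 1
  ext k
  simp [and_comm]

lemma isRecurrent_iff {s : Fin n} {c : Fin n → ℕ} :
    IsRecurrent G s c ↔ c s = G.degree s ∧ (∀ i, i ≠ s → c i < G.degree i) ∧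
      ∃ f : Fin n → ℕ, ∀ i, i ≠ s →
        G.degree i ≤ c i + (univ.filter fun j => G.Adj i j ∧ f j < f i).card := by
  refine and_congr_right fun hs => and_congr_right fun hstab => ⟨?_, ?_⟩
  · rintro ⟨l, -, hnd, hall, hval, -⟩
    refine ⟨fun i => l.idxOf i, fun i _ => ?_⟩
    obtain ⟨l₁, l₂, rfl⟩ := List.append_of_mem (hall i)
    have h1 := (validTopplings_iff hnd).1 hval l₁ i l₂ rfl
    rw [countP_eq_card_filter (hnd.sublist (List.sublist_append_left _ _))] at h1
    refine h1.trans (Nat.add_le_add_left (card_le_card fun j hj => ?_) _)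
    simp only [mem_filter] at hj ⊢
    refine ⟨hj.1, hj.2.1, ?_⟩
    have hi : i ∉ l₁ := fun hi =>
      (List.nodup_append.1 hnd).2.2 i hi i (by simp) rfl
    rw [List.idxOf_append_of_mem hj.2.2, List.idxOf_append_of_notMem hi]
    have := List.idxOf_lt_length_of_mem hj.2.2
    omega
  · rintro ⟨f, hf⟩
    have hf' : ∀ i, G.degree i ≤ c i + (univ.filter fun j => G.Adj i j ∧ f j < f i).card := by
      intro i
      by_cases hi : i = s
      · subst hi
        omega
      · exact hf i hi
    let r : Fin n → Fin n → Prop := fun a b => f a ≤ f b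
    have : Std.Total r := ⟨fun a b => le_total (f a) (f b)⟩
    have : IsTrans (Fin n) r := ⟨fun a b c => le_trans (a := f a)⟩
    let l := (univ : Finset (Fin n)).toList.insertionSort r
    have hperm : l.Perm univ.toList := List.perm_insertionSort _ _
    have hnd : l.Nodup := hperm.nodup_iff.2 (nodup_toList _)
    have hall : ∀ v, v ∈ l := fun v => hperm.mem_iff.2 (by simp)
    have hsort : l.Pairwise r := List.pairwise_insertionSort _ _
    have hval : ValidTopplings G c l := by
      refine (validTopplings_iff hnd).2 fun l₁ j l₂ hsplit => ?_
      rw [hsplit] at hnd hall hsort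
      rw [countP_eq_card_filter (hnd.sublist (List.sublist_append_left _ _))]
      refine (hf' j).trans (Nat.add_le_add_left (card_le_card fun k hk => ?_) _)
      simp only [mem_filter] at hk ⊢
      refine ⟨hk.1, hk.2.1, ?_⟩
      rcases List.mem_append.1 (hall k) with hk1 | hk2
      · exact hk1
      · exfalso
        rcases List.mem_cons.1 hk2 with rfl | hk2
        · exact lt_irrefl _ hk.2.2
        · have : f j ≤ f k :=
            (List.pairwise_cons.1 (List.pairwise_append.1 hsort).2.1).1 k hk2
          omega
    refine ⟨l, ?_, hnd, hall, hval, funext fun j => ?_⟩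
    · have hsl := hall s
      cases hl : l with
      | nil => simp [hl] at hsl
      | cons a l' =>
        have h1 : G.degree a ≤ c a := by
          rw [hl] at hval
          exact hval.1
        by_contra hne
        have := hstab a (by simpa using hne)
        omega
    · have h1 := toppleList_add_count hval j
      rw [List.count_eq_one_of_mem hnd (hall j), countP_eq_card_filter hnd] at h1
      simp only [hall, and_true] at h1
      rw [degree_eq_card_filter] at h1
      omega

end Topplings

section Canonical

variable {n : ℕ} {G : SimpleGraph (Fin n)} {s : Fin n} {c : Fin n → ℕ}

/-- The set of vertices that become unstable within `k` rounds of simultaneous topplings. -/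
def toppledBy (G : SimpleGraph (Fin n)) (s : Fin n) (c : Fin n → ℕ) : ℕ → Set (Fin n)
  | 0 => {s}
  | k + 1 => toppledBy G s c k ∪
      {i | G.degree i ≤ c i + (univ.filter fun j => G.Adj i j ∧ j ∈ toppledBy G s c k).card}

lemma toppledBy_mono : Monotone (toppledBy G s c) :=
  monotone_nat_of_le_succ fun _ => Set.subset_union_left

lemma IsRecurrent.exists_isCanonicalHeight (hc : IsRecurrent G s c) :
    ∃ h, IsCanonicalHeight G s c h := by
  obtain ⟨-, hstab, f, hf⟩ := isRecurrent_iff.1 hc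
  have hmem : ∀ k i, f i ≤ k → i ∈ toppledBy G s c k := by
    intro k
    induction k with
    | zero =>
      intro i hi
      by_contra his
      have h1 := hstab i his
      have h2 := hf i his
      rw [filter_false_of_mem (by intros; omega), card_empty] at h2
      omega
    | succ k ih =>
      intro i hi
      by_cases his : i = s
      · exact toppledBy_mono (Nat.zero_le _) his
      · refine Or.inr ((hf i his).trans (Nat.add_le_add_left (card_le_card fun j hj => ?_) _))
        simp only [mem_filter] at hj ⊢
        exact ⟨hj.1, hj.2.1, ih j (by omega)⟩
  have hex : ∀ i, ∃ k, i ∈ toppledBy G s c k := fun i => ⟨f i, hmem _ i le_rfl⟩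
  obtain ⟨h, hle⟩ : ∃ h : Fin n → ℕ, ∀ i k, h i ≤ k ↔ i ∈ toppledBy G s c k :=
    ⟨fun i => Nat.find (hex i), fun i _ =>
      ⟨fun hik => toppledBy_mono hik (Nat.find_spec (hex i)), fun hik => Nat.find_min' _ hik⟩⟩
  refine ⟨h, fun i => ?_, fun i his => ?_, fun i his => ?_⟩
  · rw [← Nat.le_zero, hle]
    rfl
  all_goals
    have hne : h i ≠ 0 := fun h0 => his ((hle i 0).1 h0.le)
    obtain ⟨k, hk⟩ := Nat.exists_eq_succ_of_ne_zero hne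
    simp only [hk, Nat.succ_eq_add_one]
  · have hnot : i ∉ toppledBy G s c k := fun h => by
      have := (hle i k).2 h
      omega
    cases k with
    | zero =>
      rw [filter_false_of_mem (by intros; omega), card_empty]
      exact hstab i his
    | succ k =>
      have h1 : ¬ _ := fun h => hnot (Or.inr h)
      simp only [Set.mem_ofPred_eq, not_le, ← hle] at h1
      simpa only [add_lt_add_iff_right, Nat.lt_succ_iff] using h1
  · have hin : i ∈ toppledBy G s c (k + 1) := (hle i _).1 hk.le
    rcases hin with h | h
    · have := (hle i k).2 h
      omega
    · simp only [Set.mem_ofPred_eq, ← hle] at h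
      simpa only [Nat.lt_succ_iff] using h

end Canonical

/-- In a finite set `L` of a linear order, each `r` with `1 ≤ r ≤ #L` is the number of elements
of `L` above some element of `L`. -/
lemma exists_mem_card_filter_ge_eq {α : Type*} [LinearOrder α] (L : Finset α) {r : ℕ}
    (hr : 0 < r) (hrL : r ≤ L.card) : ∃ a ∈ L, (L.filter (a ≤ ·)).card = r := by
  induction L using Finset.induction_on_min with
  | empty => simp at hrL; omega
  | insert a L ha ih =>
    have hna : a ∉ L := fun h => lt_irrefl _ (ha a h)
    rw [card_insert_of_notMem hna] at hrL
    rcases Nat.lt_or_ge L.card r with hlt | hge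
    · refine ⟨a, mem_insert_self _ _, ?_⟩
      rw [filter_true_of_mem, card_insert_of_notMem hna]
      · omega
      · intro x hx
        rcases mem_insert.1 hx with rfl | hx
        · exact le_rfl
        · exact (ha x hx).le
    · obtain ⟨b, hb, hbr⟩ := ih hge
      refine ⟨b, mem_insert_of_mem hb, ?_⟩
      rw [filter_insert, if_neg (not_le.2 (ha b hb)), hbr]

lemma le_of_card_filter_ge_le {α : Type*} [LinearOrder α] {L : Finset α} {a b : α} (ha : a ∈ L)
    (h : (L.filter (a ≤ ·)).card ≤ (L.filter (b ≤ ·)).card) : b ≤ a := by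
  by_contra hlt
  rw [not_le] at hlt
  refine h.not_gt (card_lt_card ?_)
  refine (ssubset_iff_of_subset fun x hx => ?_).2 ⟨a, by simp [ha], by simp [hlt]⟩
  simp only [mem_filter] at hx ⊢
  exact ⟨hx.1, hlt.le.trans hx.2⟩

section Bijection

variable {n : ℕ} {G : SimpleGraph (Fin n)} {s : Fin n}

lemma isRecurrent_treeConfig {T : SimpleGraph (Fin n)} (hTG : T ≤ G) (hT : T.IsTree) :
    IsRecurrent G s (treeConfig G T s) := by
  obtain ⟨p, hr⟩ := hT.exists_isRootedBy s
  have hh := isCanonicalHeight_dist hTG hr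
  exact isRecurrent_iff.2 ⟨treeConfig_root hT.connected,
    fun i hi => (Nat.le_add_right _ _).trans_lt (hh.add_lt_degree i hi),
    T.dist s, hh.degree_le_add⟩

lemma treeConfig_injective {T T' : SimpleGraph (Fin n)} (hTG : T ≤ G) (hT : T.IsTree)
    (hTG' : T' ≤ G) (hT' : T'.IsTree) (heq : treeConfig G T s = treeConfig G T' s) :
    T = T' := by
  obtain ⟨p, hr⟩ := hT.exists_isRootedBy s
  obtain ⟨p', hr'⟩ := hT'.exists_isRootedBy s
  have hh := isCanonicalHeight_dist hTG hr
  have hh' := isCanonicalHeight_dist hTG' hr'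
  rw [heq] at hh
  have hd : T.dist s = T'.dist s := hh.unique hh'
  have hp : ∀ i, i ≠ s → p i = p' i := by
    intro i hi
    have h1 := treeConfig_add (G := G) hr hi
    have h2 := treeConfig_add (G := G) hr' hi
    have h3 := hr.height_parent i hi
    have h4 := hr'.height_parent i hi
    have h5 := hTG (hr.adj_parent hi)
    have h6 := hTG' (hr'.adj_parent hi)
    rw [heq, hd] at h1
    rw [hd] at h3
    exact le_antisymm
      (le_of_card_filter_ge_le
        (L := univ.filter fun j => G.Adj i j ∧ T'.dist s j + 1 = T'.dist s i)
        (by simp [h4, h6]) (by rw [filter_filter, filter_filter]; omega))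
      (le_of_card_filter_ge_le
        (L := univ.filter fun j => G.Adj i j ∧ T'.dist s j + 1 = T'.dist s i)
        (by simp [h3, h5]) (by rw [filter_filter, filter_filter]; omega))
  ext i j
  rw [hr.adj_iff, hr'.adj_iff]
  refine or_congr (and_congr_right fun hi => ?_) (and_congr_right fun hj => ?_)
  · rw [hp i hi]
  · rw [hp j hj]

lemma IsRecurrent.exists_treeConfig_eq {c : Fin n → ℕ} (hc : IsRecurrent G s c) :
    ∃ T ≤ G, T.IsTree ∧ treeConfig G T s = c := by
  obtain ⟨h, hh⟩ := hc.exists_isCanonicalHeight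
  have hex : ∀ i, ∃ q, i ≠ s → (G.Adj i q ∧ h q + 1 = h i) ∧
      c i + (univ.filter fun j => G.Adj i j ∧ h j + 1 < h i).card
        + (univ.filter fun j => (G.Adj i j ∧ h j + 1 = h i) ∧ q ≤ j).card = G.degree i := by
    intro i
    by_cases hi : i = s
    · exact ⟨i, fun hne => absurd hi hne⟩
    · have h1 := hh.add_lt_degree i hi
      have h2 := hh.degree_le_add i hi
      rw [card_filter_lt_eq] at h2
      obtain ⟨q, hq, hqr⟩ := exists_mem_card_filter_ge_eq
        (univ.filter fun j => G.Adj i j ∧ h j + 1 = h i)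
        (r := G.degree i - (c i + (univ.filter fun j => G.Adj i j ∧ h j + 1 < h i).card))
        (by omega) (by omega)
      rw [filter_filter] at hqr
      exact ⟨q, fun _ => ⟨(mem_filter.1 hq).2, by omega⟩⟩
  choose p hp using hex
  have hne : ∀ i, i ≠ s → i ≠ p i := fun i hi => (hp i hi).1.1.ne
  let T : SimpleGraph (Fin n) :=
    { Adj := fun i j => (i ≠ s ∧ p i = j) ∨ (j ≠ s ∧ p j = i)
      symm := ⟨fun i j hij => hij.symm⟩
      loopless := ⟨fun i hi => by
        rcases hi with ⟨h1, h2⟩ | ⟨h1, h2⟩ <;> exact hne i h1 h2.symm⟩ }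
  have hr : IsRootedBy T s p h :=
    ⟨fun _ _ => Iff.rfl, fun i hi => (hp i hi).1.2, (hh.eq_zero_iff s).2 rfl⟩
  have hd : T.dist s = h := funext hr.dist_eq
  refine ⟨T, ?_, hr.isTree, funext fun i => ?_⟩
  · rintro i j (⟨hi, rfl⟩ | ⟨hj, rfl⟩)
    · exact (hp i hi).1.1
    · exact (hp j hj).1.1.symm
  · by_cases hi : i = s
    · subst hi
      rw [treeConfig_root hr.connected, hc.1]
    · have h1 := treeConfig_add (G := G) (hd ▸ hr) hi
      have h2 := (hp i hi).2
      rw [hd] at h1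
      omega

end Bijection

/-- the map `T ↦ c(T)` is a bijection from the set of spanning trees of
the permutation graph `G_π` onto the set of recurrent configurations `Rec_s(G_π)`. -/
theorem treeConfig_bijOn {n : ℕ} (π : Equiv.Perm (Fin n))
    (hπ : IsIndecomposable π) (s : Fin n) :
    Set.BijOn (fun T : SimpleGraph (Fin n) => treeConfig (permGraph π) T s)
      {T | T ≤ permGraph π ∧ T.IsTree}
      {c | IsRecurrent (permGraph π) s c} := by
  refine ⟨fun T hT => isRecurrent_treeConfig hT.1 hT.2,
    fun T hT T' hT' heq => treeConfig_injective hT.1 hT.2 hT'.1 hT'.2 heq, fun c hc => ?_⟩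
  obtain ⟨T, hTG, hT, heq⟩ := IsRecurrent.exists_treeConfig_eq hc
  exact ⟨T, ⟨hTG, hT⟩, heq⟩
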